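/- arXiv:1402.5455 — 8 statements merged into one kernel-verified Lean document; each statement's English description precedes it below -/
import Mathlib

section
/- For every real number a > 0 and every φ ∈ ℝ, the point (a·cos φ, (1/a)·sin φ) ∈ ℝ² equals √(C(φ)) · (cos Φ(φ), sin Φ(φ)); that is, the curve φ ↦ (a·cos φ, (1/a)·sin φ) has radial coordinate √(C(φ)) and continuous angular coordinate Φ(φ). -/
/-!
View the curve as `z : ℝ → ℂ`. For any nonvanishing differentiable `z`, the logarithmic derivative
of `‖z‖` is the real part of that of `z`, so if `θ' = Im (z' / z)` then `z` and `‖z‖ exp (iθ)` have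
the same logarithmic derivative and therefore differ by a constant factor. For the ellipse
`z = a cos t + i b sin t` the Wronskian `x y' - y x'` is the constant `a b`, whence
`Im (z' / z) = a b / |z|²`; the theorem is the case `b = 1 / a`.
-/

open Complex

section PolarForm

variable {z : ℝ → ℂ} {θ : ℝ → ℝ} {s : Set ℝ} {t t₀ : ℝ}

theorem logDeriv_norm_eq_re (hz : DifferentiableAt ℝ z t) (h0 : z t ≠ 0) :
    logDeriv (fun u ↦ ‖z u‖) t = (logDeriv z t).re := by
  have hsq : logDeriv (fun u ↦ ‖z u‖ ^ 2) t = 2 * logDeriv (fun u ↦ ‖z u‖) t :=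
    logDeriv_fun_pow (hz.norm ℝ h0) 2
  have hderiv : deriv (fun u ↦ ‖z u‖ ^ 2) t = 2 * inner ℝ (z t) (deriv z t) :=
    hz.hasDerivAt.norm_sq.deriv
  have hre : inner ℝ (z t) (deriv z t) / ‖z t‖ ^ 2 = (logDeriv z t).re := by
    rw [logDeriv_apply, div_re, Complex.sq_norm, Complex.inner, mul_re, conj_re, conj_im]
    ring
  rw [logDeriv_apply, hderiv, mul_div_assoc, hre] at hsq
  linarith

theorem logDeriv_ofReal_comp {f : ℝ → ℝ} (hf : DifferentiableAt ℝ f t) :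
    logDeriv (fun u ↦ (f u : ℂ)) t = (logDeriv f t : ℝ) := by
  rw [logDeriv_apply, logDeriv_apply, hf.hasDerivAt.ofReal_comp.deriv, ofReal_div]

theorem logDeriv_exp_ofReal_mul_I (hθ : DifferentiableAt ℝ θ t) :
    logDeriv (fun u ↦ exp (θ u * I)) t = deriv θ t * I := by
  rw [logDeriv_apply, (hθ.hasDerivAt.ofReal_comp.mul_const I).cexp.deriv,
    mul_div_cancel_left₀ _ (exp_ne_zero _)]

theorem logDeriv_norm_mul_exp (hz : DifferentiableAt ℝ z t) (h0 : z t ≠ 0)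
    (hθ : DifferentiableAt ℝ θ t) (hderiv : deriv θ t = (logDeriv z t).im) :
    logDeriv (fun u ↦ ‖z u‖ * exp (θ u * I)) t = logDeriv z t := by
  have hnorm : DifferentiableAt ℝ (fun u ↦ ‖z u‖) t := hz.norm ℝ h0
  have hexp : DifferentiableAt ℝ (fun u ↦ exp (θ u * I)) t :=
    (hθ.hasDerivAt.ofReal_comp.mul_const I).cexp.differentiableAt
  have hnorm0 : (‖z t‖ : ℂ) ≠ 0 := ofReal_ne_zero.2 (norm_ne_zero_iff.2 h0)
  rw [logDeriv_mul t hnorm0 (exp_ne_zero _)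
      hnorm.hasDerivAt.ofReal_comp.differentiableAt hexp,
    logDeriv_ofReal_comp hnorm, logDeriv_norm_eq_re hz h0, logDeriv_exp_ofReal_mul_I hθ, hderiv,
    re_add_im]

theorem eqOn_norm_mul_exp_of_deriv_eq_im_logDeriv (hs : IsOpen s) (hs' : IsPreconnected s)
    (hz : DifferentiableOn ℝ z s) (h0 : ∀ t ∈ s, z t ≠ 0) (hθ : DifferentiableOn ℝ θ s)
    (hderiv : ∀ t ∈ s, deriv θ t = (logDeriv z t).im)
    (ht₀ : t₀ ∈ s) (hz₀ : z t₀ = ‖z t₀‖ * exp (θ t₀ * I)) :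
    s.EqOn z (fun t ↦ ‖z t‖ * exp (θ t * I)) := by
  have hpolar0 : ∀ t ∈ s, (‖z t‖ : ℂ) * exp (θ t * I) ≠ 0 := fun t ht ↦
    mul_ne_zero (ofReal_ne_zero.2 (norm_ne_zero_iff.2 (h0 t ht))) (exp_ne_zero _)
  have hpolar : DifferentiableOn ℝ (fun t ↦ (‖z t‖ : ℂ) * exp (θ t * I)) s :=
    (ofRealCLM.differentiable.comp_differentiableOn (hz.norm ℝ h0)).mul
      ((ofRealCLM.differentiable.comp_differentiableOn hθ).mul_const I).cexp
  have hlog : s.EqOn (logDeriv z) (logDeriv fun t ↦ ‖z t‖ * exp (θ t * I)) := fun t ht ↦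
    have hst := hs.mem_nhds ht
    (logDeriv_norm_mul_exp (hz.differentiableAt hst) (h0 t ht) (hθ.differentiableAt hst)
      (hderiv t ht)).symm
  obtain ⟨c, -, hc⟩ := (logDeriv_eqOn_iff hz hpolar hs hs' hpolar0 h0).1 hlog
  have hc1 : c = 1 := by
    have hct₀ : z t₀ = c * z t₀ := by
      simpa only [Pi.smul_apply, smul_eq_mul, ← hz₀] using hc ht₀
    exact (right_eq_mul₀ (h0 t₀ ht₀)).1 hct₀
  rwa [hc1, one_smul] at hc

theorem eq_norm_mul_exp_arg_add_integral (hz : ContDiff ℝ 1 z) (h0 : ∀ t, z t ≠ 0) (t₀ t : ℝ) :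
    z t = ‖z t‖ * exp ((arg (z t₀) + ∫ u in t₀..t, (logDeriv z u).im : ℝ) * I) := by
  have hcont : Continuous fun u ↦ (logDeriv z u).im :=
    continuous_im.comp ((hz.continuous_deriv le_rfl).div hz.continuous h0)
  have hθ : ∀ u, HasDerivAt (fun u ↦ arg (z t₀) + ∫ v in t₀..u, (logDeriv z v).im)
      (logDeriv z u).im u := fun u ↦
    (hcont.integral_hasStrictDerivAt t₀ u).hasDerivAt.const_add _
  refine eqOn_norm_mul_exp_of_deriv_eq_im_logDeriv isOpen_univ isPreconnected_univ
    (hz.differentiable one_ne_zero).differentiableOn (fun u _ ↦ h0 u)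
    (fun u _ ↦ (hθ u).differentiableAt.differentiableWithinAt) (fun u _ ↦ (hθ u).deriv)
    (Set.mem_univ t₀) ?_ (Set.mem_univ t)
  rw [intervalIntegral.integral_same, add_zero, norm_mul_exp_arg_mul_I]

end PolarForm

/-- The ellipse with semi-axes `a` and `b`, parametrized by the eccentric angle, as a curve in the
complex plane. -/
noncomputable def ellipseCurve (a b t : ℝ) : ℂ :=
  ⟨a * Real.cos t, b * Real.sin t⟩

namespace ellipseCurve

variable (a b t : ℝ)

@[simp]
theorem re_eq : (ellipseCurve a b t).re = a * Real.cos t := rfl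

@[simp]
theorem im_eq : (ellipseCurve a b t).im = b * Real.sin t := rfl

theorem norm_eq_sqrt :
    ‖ellipseCurve a b t‖ = √(a ^ 2 * Real.cos t ^ 2 + b ^ 2 * Real.sin t ^ 2) := by
  rw [norm_eq_sqrt_sq_add_sq, re_eq, im_eq, mul_pow, mul_pow]

theorem contDiff {n : WithTop ℕ∞} : ContDiff ℝ n (ellipseCurve a b) :=
  equivRealProdCLM.symm.contDiff.comp
    ((contDiff_const.mul Real.contDiff_cos).prodMk (contDiff_const.mul Real.contDiff_sin))

theorem deriv_eq : deriv (ellipseCurve a b) t = ⟨a * -Real.sin t, b * Real.cos t⟩ :=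
  (equivRealProdCLM.symm.hasFDerivAt.comp_hasDerivAt t
    (((Real.hasDerivAt_cos t).const_mul a).prodMk ((Real.hasDerivAt_sin t).const_mul b))).deriv

theorem im_logDeriv :
    (logDeriv (ellipseCurve a b) t).im =
      a * b / (a ^ 2 * Real.cos t ^ 2 + b ^ 2 * Real.sin t ^ 2) := by
  rw [logDeriv_apply, deriv_eq, div_im, ← sub_div, normSq_apply, re_eq, im_eq]
  congr 1
  · linear_combination a * b * Real.sin_sq_add_cos_sq t
  · ring

variable {a b}

theorem ne_zero (ha : a ≠ 0) (hb : b ≠ 0) : ellipseCurve a b t ≠ 0 := by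
  intro h
  have hcos : Real.cos t = 0 := by simpa [ha] using congrArg re h
  have hsin : Real.sin t = 0 := by simpa [hb] using congrArg im h
  simpa [hcos, hsin] using Real.sin_sq_add_cos_sq t

theorem eq_norm_mul_exp_integral (ha : 0 < a) (hb : b ≠ 0) :
    ellipseCurve a b t = ‖ellipseCurve a b t‖ *
      exp ((∫ u in 0..t, a * b / (a ^ 2 * Real.cos u ^ 2 + b ^ 2 * Real.sin u ^ 2) : ℝ) * I) := by
  have harg : arg (ellipseCurve a b 0) = 0 :=
    arg_eq_zero_iff.2 ⟨by simpa using ha.le, by simp⟩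
  simpa only [harg, zero_add, im_logDeriv] using
    eq_norm_mul_exp_arg_add_integral (contDiff a b) (ne_zero · ha.ne' hb) 0 t

end ellipseCurve

/-- For every real number `a > 0` and every `φ ∈ ℝ`, the point
`(a·cos φ, (1/a)·sin φ) ∈ ℝ²` equals `√(C(φ)) · (cos Φ(φ), sin Φ(φ))`, where
`C(φ) = a²cos²φ + (1/a²)sin²φ` and `Φ(φ) = ∫₀^φ dt / C(t)`. -/
theorem stmt_0 (a : ℝ) (ha : 0 < a)
    (C Φ : ℝ → ℝ)
    (hC : ∀ φ : ℝ, C φ = a ^ 2 * Real.cos φ ^ 2 + (1 / a ^ 2) * Real.sin φ ^ 2)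
    (hΦ : ∀ φ : ℝ, Φ φ = ∫ t in (0:ℝ)..φ, 1 / C t) :
    ∀ φ : ℝ,
      (a * Real.cos φ, (1 / a) * Real.sin φ) =
        (Real.sqrt (C φ) * Real.cos (Φ φ), Real.sqrt (C φ) * Real.sin (Φ φ)) := by
  intro φ
  have hC' : ∀ t, C t = a ^ 2 * Real.cos t ^ 2 + (1 / a) ^ 2 * Real.sin t ^ 2 := fun t ↦ by
    rw [hC, one_div_pow]
  have hnorm : ‖ellipseCurve a (1 / a) φ‖ = √(C φ) := by
    rw [ellipseCurve.norm_eq_sqrt, hC']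
  have hpolar : ellipseCurve a (1 / a) φ = √(C φ) * exp (Φ φ * I) := by
    have h := ellipseCurve.eq_norm_mul_exp_integral φ ha (one_div_ne_zero ha.ne')
    simpa only [mul_one_div_cancel ha.ne', ← hC', ← hΦ, hnorm] using h
  ext
  · simpa only [ellipseCurve.re_eq, re_ofReal_mul, exp_ofReal_mul_I_re] using congrArg re hpolar
  · simpa only [ellipseCurve.im_eq, im_ofReal_mul, exp_ofReal_mul_I_im] using congrArg im hpolar
end

section
/- For every a > 0: if γ > 1 then x_w(s) tends to −∞ as s → 0⁺, and if 0 < γ < 1 then x_w(s) tends to +∞ as s → 0⁺. -/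
/-!
Multiplying the point `a cos φ + i b sin φ` of an ellipse by `e^{-iφ}` gives
`(a cos² φ + b sin² φ) + i (b - a) sin φ cos φ`, which stays in the right half-plane. So the
argument of that point is `φ` plus an angle in `(-π/2, π/2)`. Its derivative is `a b / C(φ)`, where
`C(φ) = a² cos² φ + b² sin² φ`, hence `∫₀^φ 1 / C = φ / (a b) + O(1)`. As `log C` is bounded too,
`x_w(s) = (γ - 1 / (a b)) g_v log s + O(1)`, and `log s → -∞` as `s → 0⁺`.
-/

open Real Filter Topology Asymptotics

/-- The squared distance from the origin to the point `(a cos φ, b sin φ)` of the ellipse with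
semi-axes `a` and `b`. The function `C` of the theorem is the case `b = 1 / a`. -/
noncomputable def ellipseNormSq (a b φ : ℝ) : ℝ :=
  a ^ 2 * cos φ ^ 2 + b ^ 2 * sin φ ^ 2

/-- The angle from the direction `φ` to the point `(a cos φ, b sin φ)` of an ellipse, for `a` and
`b` positive: the argument of `e^{-iφ} (a cos φ + i b sin φ)`, whose real part is positive. -/
noncomputable def ellipseLag (a b φ : ℝ) : ℝ :=
  arctan ((b - a) * (sin φ * cos φ) / (a * cos φ ^ 2 + b * sin φ ^ 2))

lemma hasDerivAt_arctan_div {f g : ℝ → ℝ} {f' g' x : ℝ} (hf : HasDerivAt f f' x)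
    (hg : HasDerivAt g g' x) (hgx : g x ≠ 0) :
    HasDerivAt (fun y => arctan (f y / g y)) ((f' * g x - f x * g') / (g x ^ 2 + f x ^ 2)) x := by
  refine (hf.div hg hgx).arctan.congr_deriv ?_
  simp only [Pi.div_apply]
  field_simp

lemma mul_cos_sq_add_mul_sin_sq_pos {p q : ℝ} (hp : 0 < p) (hq : 0 < q) (φ : ℝ) :
    0 < p * cos φ ^ 2 + q * sin φ ^ 2 := by
  rcases eq_or_ne (sin φ) 0 with hsin | hsin
  · have hcos : cos φ ^ 2 = 1 := by simpa [hsin] using sin_sq_add_cos_sq φ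
    simpa [hsin, hcos] using hp
  · positivity

section Ellipse

variable {a b : ℝ}

lemma ellipseNormSq_pos (ha : 0 < a) (hb : 0 < b) (φ : ℝ) : 0 < ellipseNormSq a b φ :=
  mul_cos_sq_add_mul_sin_sq_pos (pow_pos ha 2) (pow_pos hb 2) φ

lemma continuous_ellipseNormSq (a b : ℝ) : Continuous (ellipseNormSq a b) := by
  unfold ellipseNormSq
  fun_prop

lemma periodic_ellipseNormSq (a b : ℝ) : Function.Periodic (ellipseNormSq a b) π := fun φ => by
  simp only [ellipseNormSq, cos_add_pi, sin_add_pi, neg_sq]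

lemma isBigO_log_ellipseNormSq (ha : 0 < a) (hb : 0 < b) :
    (fun φ => log (ellipseNormSq a b φ)) =O[⊤] (1 : ℝ → ℝ) := by
  have hcont : Continuous fun φ => log (ellipseNormSq a b φ) :=
    (continuous_ellipseNormSq a b).log fun φ => (ellipseNormSq_pos ha hb φ).ne'
  obtain ⟨K, hK⟩ := (((periodic_ellipseNormSq a b).comp log).isBounded_of_continuous
    pi_ne_zero hcont).exists_norm_le
  exact .of_bound K (.of_forall fun φ => by simpa using hK _ (Set.mem_range_self φ))

lemma hasDerivAt_ellipseLag (ha : 0 < a) (hb : 0 < b) (φ : ℝ) :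
    HasDerivAt (ellipseLag a b) (a * b / ellipseNormSq a b φ - 1) φ := by
  have hnum : HasDerivAt (fun x => (b - a) * (sin x * cos x))
      ((b - a) * (cos φ ^ 2 - sin φ ^ 2)) φ :=
    (((hasDerivAt_sin φ).mul (hasDerivAt_cos φ)).const_mul (b - a)).congr_deriv (by ring)
  have hden : HasDerivAt (fun x => a * cos x ^ 2 + b * sin x ^ 2)
      (2 * (b - a) * (sin φ * cos φ)) φ :=
    ((((hasDerivAt_cos φ).pow 2).const_mul a).add
      (((hasDerivAt_sin φ).pow 2).const_mul b)).congr_deriv (by push_cast; ring)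
  have hnormSq : (a * cos φ ^ 2 + b * sin φ ^ 2) ^ 2 + ((b - a) * (sin φ * cos φ)) ^ 2
      = ellipseNormSq a b φ := by
    unfold ellipseNormSq
    linear_combination (a ^ 2 * cos φ ^ 2 + b ^ 2 * sin φ ^ 2) * sin_sq_add_cos_sq φ
  have hwronskian : (b - a) * (cos φ ^ 2 - sin φ ^ 2) * (a * cos φ ^ 2 + b * sin φ ^ 2)
      - (b - a) * (sin φ * cos φ) * (2 * (b - a) * (sin φ * cos φ))
      = a * b - ellipseNormSq a b φ := by
    unfold ellipseNormSq
    linear_combination ((b - a) * (a * cos φ ^ 2 - b * sin φ ^ 2) + a * b) * sin_sq_add_cos_sq φ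
  refine (hasDerivAt_arctan_div hnum hden
    (mul_cos_sq_add_mul_sin_sq_pos ha hb φ).ne').congr_deriv ?_
  rw [hwronskian, hnormSq, sub_div, div_self (ellipseNormSq_pos ha hb φ).ne']

lemma integral_one_div_ellipseNormSq (ha : 0 < a) (hb : 0 < b) (φ : ℝ) :
    ∫ t in (0 : ℝ)..φ, 1 / ellipseNormSq a b t = (φ + ellipseLag a b φ) / (a * b) := by
  have hderiv (t : ℝ) : HasDerivAt (fun x => (x + ellipseLag a b x) / (a * b))
      (1 / ellipseNormSq a b t) t :=
    (((hasDerivAt_id t).add (hasDerivAt_ellipseLag ha hb t)).div_const (a * b)).congr_deriv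
      (by field_simp; ring)
  have hcont : Continuous fun t => 1 / ellipseNormSq a b t :=
    continuous_const.div (continuous_ellipseNormSq a b) fun t => (ellipseNormSq_pos ha hb t).ne'
  rw [intervalIntegral.integral_eq_sub_of_hasDerivAt (fun t _ => hderiv t)
    (hcont.intervalIntegrable 0 φ)]
  simp [ellipseLag]

lemma isBigO_ellipseLag (a b : ℝ) : ellipseLag a b =O[⊤] (1 : ℝ → ℝ) :=
  .of_bound (π / 2) <| .of_forall fun φ => by
    simpa [ellipseLag] using
      abs_le.2 ⟨(neg_pi_div_two_lt_arctan _).le, (arctan_lt_pi_div_two _).le⟩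

lemma isBigO_integral_one_div_ellipseNormSq_sub (ha : 0 < a) (hb : 0 < b) :
    (fun φ => (∫ t in (0 : ℝ)..φ, 1 / ellipseNormSq a b t) - φ / (a * b))
      =O[⊤] (1 : ℝ → ℝ) := by
  refine ((isBigO_ellipseLag a b).const_mul_left (a * b)⁻¹).congr_left fun φ => ?_
  rw [integral_one_div_ellipseNormSq ha hb]
  ring

end Ellipse

lemma isEquivalent_of_sub_isBigO_one {α E : Type*} [NormedAddCommGroup E] {l : Filter α}
    {f g : α → E} (hfg : (f - g) =O[l] (1 : α → ℝ)) (hg : Tendsto (fun x => ‖g x‖) l atTop) :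
    f ~[l] g :=
  hfg.trans_isLittleO ((isLittleO_one_left_iff ℝ).2 hg)

lemma isEquivalent_mul_log_of_sub_isBigO_one {κ : ℝ} (hκ : κ ≠ 0) {f : ℝ → ℝ}
    (hf : (fun s => f s - κ * log s) =O[𝓝[>] 0] (1 : ℝ → ℝ)) :
    f ~[𝓝[>] 0] fun s => κ * log s := by
  refine isEquivalent_of_sub_isBigO_one hf ?_
  simp only [norm_mul, norm_eq_abs]
  exact (tendsto_abs_atBot_atTop.comp tendsto_log_nhdsGT_zero).const_mul_atTop (abs_pos.2 hκ)

theorem stmt_5_general {a b gv gw δv γ k r : ℝ} (ha : 0 < a) (hb : 0 < b) (hgv : 0 < gv)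
    (hγ : γ * gv = -gw * δv) {φ xw : ℝ → ℝ} (hφ : ∀ s, φ s = -gv * log s + k)
    (hxw : ∀ s, xw s = -gw * δv * log s - gw / 2 * log (ellipseNormSq a b (φ s))
      + (∫ t in (0 : ℝ)..φ s, 1 / ellipseNormSq a b t) + r) :
    (1 / (a * b) < γ → Tendsto xw (𝓝[>] 0) atBot) ∧
    (γ < 1 / (a * b) → Tendsto xw (𝓝[>] 0) atTop) := by
  set κ := (γ - 1 / (a * b)) * gv with hκ
  have hremainder : (fun s => xw s - κ * log s) =O[𝓝[>] 0] (1 : ℝ → ℝ) := by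
    have hlog := (isBigO_log_ellipseNormSq ha hb).const_mul_left (-(gw / 2))
    have hint := isBigO_integral_one_div_ellipseNormSq_sub ha hb
    have hconst := isBigO_const_one ℝ (k / (a * b) + r) (𝓝[>] (0 : ℝ))
    refine (((hlog.add hint).comp_tendsto (k := φ) tendsto_top).add hconst).congr_left fun s => ?_
    simp only [Function.comp_apply, hxw, hκ]
    linear_combination log s * hγ - hφ s / (a * b)
  constructor <;> intro hlt
  · have hpos : 0 < κ := mul_pos (sub_pos.2 hlt) hgv
    exact (isEquivalent_mul_log_of_sub_isBigO_one hpos.ne' hremainder).symm.tendsto_atBot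
      (tendsto_log_nhdsGT_zero.const_mul_atBot hpos)
  · have hneg : κ < 0 := mul_neg_of_neg_of_pos (sub_neg.2 hlt) hgv
    exact (isEquivalent_mul_log_of_sub_isBigO_one hneg.ne hremainder).symm.tendsto_atTop
      (tendsto_log_nhdsGT_zero.const_mul_atBot_of_neg hneg)

/-- For every `a > 0`: if `γ > 1` then `x_w(s)` tends to `−∞` as
`s → 0⁺`, and if `0 < γ < 1` then `x_w(s)` tends to `+∞` as `s → 0⁺`. -/
theorem stmt_5 (a Cv Ev αv Cw Ew αw ε : ℝ)
    (ha : 0 < a) (hCv : 0 < Cv) (hEv : 0 < Ev) (hαv : 0 < αv)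
    (hCw : 0 < Cw) (hEw : 0 < Ew) (hαw : 0 < αw) (hε : 0 < ε)
    (δv gv δw gw γ c₁ c₂ c₃ : ℝ)
    (hδv : δv = Cv / Ev) (hgv : gv = αv / Ev)
    (hδw : δw = Cw / Ew) (hgw : gw = -(αw / Ew))
    (hγ : γ = (αw * Cv) / (αv * Ew))
    (hc₁ : c₁ = ε ^ (1 - δv)) (hc₂ : c₂ = gv * Real.log ε)
    (hc₃ : c₃ = gw * Real.log ε)
    (C Φ : ℝ → ℝ)
    (hC : ∀ φ : ℝ, C φ = a ^ 2 * Real.cos φ ^ 2 + (1 / a ^ 2) * Real.sin φ ^ 2)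
    (hΦ : ∀ φ : ℝ, Φ φ = ∫ t in (0:ℝ)..φ, 1 / C t)
    (φ xw : ℝ → ℝ)
    (hφ : ∀ s : ℝ, φ s = -gv * Real.log s + c₂)
    (hxw : ∀ s : ℝ, xw s = -gw * δv * Real.log s - (gw / 2) * Real.log (C (φ s))
        + Φ (φ s) + c₃ - gw * Real.log c₁) :
    (1 < γ → Filter.Tendsto xw (nhdsWithin 0 (Set.Ioi 0)) Filter.atBot) ∧
    (0 < γ → γ < 1 → Filter.Tendsto xw (nhdsWithin 0 (Set.Ioi 0)) Filter.atTop) := by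
  have hgv_pos : 0 < gv := hgv ▸ div_pos hαv hEv
  have hγgv : γ * gv = -gw * δv := by
    rw [hγ, hgv, hgw, hδv]
    field_simp
  obtain rfl : C = ellipseNormSq a (1 / a) := funext fun t => by
    rw [hC, ellipseNormSq, one_div_pow]
  have hgeneral := stmt_5_general (xw := xw) (r := c₃ - gw * Real.log c₁) ha
    (one_div_pos.2 ha) hgv_pos hγgv hφ fun s => by rw [hxw, hΦ, add_sub_assoc]
  rw [mul_one_div_cancel ha.ne', div_one] at hgeneral
  exact ⟨hgeneral.1, fun _ => hgeneral.2⟩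
end

section
/- The function x_w is differentiable on (0, ∞), and for every s > 0 its derivative satisfies x_w′(s) = −(1/s) · [ g_w δ_v + ( g_v g_w (a² − 1/a²) sin φ(s) cos φ(s) + g_v ) / C(φ(s)) ]. Consequently, x_w′(s) = 0 if and only if C_v · C(φ(s)) + α_v (a² − 1/a²) sin φ(s) cos φ(s) = α_v E_w / α_w. -/
/-!
The function `C` is the restriction of a positive definite diagonal quadratic form to the unit
circle, so it never vanishes. For any such function, `k log C + ∫ 1 / C` has derivative
`(k C' + 1) / C`, and composing with `φ`, where `φ'(s) = -g_v / s`, gives `x_w'`. This derivative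
is the nonzero factor `α_w / (s E_w E_v C(φ(s)))` times the difference of the two sides of the
critical-point equation.
-/

/-- The value at the point `(cos t, sin t)` of the diagonal quadratic form `p x² + q y²`.
The function `C` of the theorem is the case `p = a²`, `q = 1 / a²`. -/
noncomputable def circleForm (p q t : ℝ) : ℝ :=
  p * Real.cos t ^ 2 + q * Real.sin t ^ 2

namespace circleForm

theorem pos {p q : ℝ} (hp : 0 < p) (hq : 0 < q) (t : ℝ) : 0 < circleForm p q t :=
  calc
    0 < min p q := lt_min hp hq
    _ = min p q * Real.cos t ^ 2 + min p q * Real.sin t ^ 2 := by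
      rw [← mul_add, Real.cos_sq_add_sin_sq, mul_one]
    _ ≤ p * Real.cos t ^ 2 + q * Real.sin t ^ 2 := by
      gcongr
      · exact min_le_left p q
      · exact min_le_right p q

theorem hasDerivAt (p q t : ℝ) :
    HasDerivAt (circleForm p q) (-2 * (p - q) * Real.sin t * Real.cos t) t := by
  have h := (((Real.hasDerivAt_cos t).pow 2).const_mul p).add
    (((Real.hasDerivAt_sin t).pow 2).const_mul q)
  exact h.congr_deriv (by push_cast; ring)

theorem continuous (p q : ℝ) : Continuous (circleForm p q) :=
  continuous_iff_continuousAt.mpr fun t => (hasDerivAt p q t).continuousAt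

end circleForm

theorem hasDerivAt_mul_log_comp_add_integral_one_div {F φ : ℝ → ℝ} {F' φ' s : ℝ} (k b : ℝ)
    (hF : Continuous F) (hF₀ : ∀ t, F t ≠ 0)
    (hF' : HasDerivAt F F' (φ s)) (hφ : HasDerivAt φ φ' s) :
    HasDerivAt (fun x => k * Real.log (F (φ x)) + ∫ t in b..φ x, 1 / F t)
      ((k * F' + 1) / F (φ s) * φ') s := by
  have hlog : HasDerivAt (fun y => k * Real.log (F y)) (k * (F' / F (φ s))) (φ s) :=
    (hF'.log (hF₀ _)).const_mul k
  have hint : HasDerivAt (fun y => ∫ t in b..y, 1 / F t) (1 / F (φ s)) (φ s) :=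
    ((continuous_const.div hF hF₀).integral_hasStrictDerivAt b _).hasDerivAt
  exact ((hlog.add hint).comp s hφ).congr_deriv (by ring)

theorem neg_div_mul_div_add_div_eq_zero_iff {𝕜 : Type*} [Field 𝕜] {E E' α' c : 𝕜}
    (hE : E ≠ 0) (hE' : E' ≠ 0) (hα' : α' ≠ 0) (hc : c ≠ 0) (α K m : 𝕜) :
    -(α' / E') * (K / E) + (α / E * -(α' / E') * m + α / E) / c = 0 ↔
      K * c + α * m = α * E' / α' := by
  have hfactor : -(α' / E') * (K / E) + (α / E * -(α' / E') * m + α / E) / c =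
      -(α' / (E' * E * c)) * (K * c + α * m - α * E' / α') := by
    field_simp
    ring
  have hne : -(α' / (E' * E * c)) ≠ 0 :=
    neg_ne_zero.mpr (div_ne_zero hα' (mul_ne_zero (mul_ne_zero hE' hE) hc))
  rw [hfactor, mul_eq_zero_iff_left hne, sub_eq_zero]

/-- The function `x_w` is differentiable on `(0, ∞)`, and for every
`s > 0` its derivative satisfies
`x_w′(s) = −(1/s)·[ g_w δ_v + ( g_v g_w (a² − 1/a²) sin φ(s) cos φ(s) + g_v ) / C(φ(s)) ]`.
Consequently, `x_w′(s) = 0` if and only if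
`C_v · C(φ(s)) + α_v (a² − 1/a²) sin φ(s) cos φ(s) = α_v E_w / α_w`. -/
theorem stmt_8 (a Cv Ev αv Cw Ew αw ε : ℝ)
    (ha : 0 < a) (hCv : 0 < Cv) (hEv : 0 < Ev) (hαv : 0 < αv)
    (hCw : 0 < Cw) (hEw : 0 < Ew) (hαw : 0 < αw) (hε : 0 < ε)
    (δv gv δw gw c₁ c₂ c₃ : ℝ)
    (hδv : δv = Cv / Ev) (hgv : gv = αv / Ev)
    (hδw : δw = Cw / Ew) (hgw : gw = -(αw / Ew))
    (hc₁ : c₁ = ε ^ (1 - δv)) (hc₂ : c₂ = gv * Real.log ε)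
    (hc₃ : c₃ = gw * Real.log ε)
    (C Φ : ℝ → ℝ)
    (hC : ∀ φ : ℝ, C φ = a ^ 2 * Real.cos φ ^ 2 + (1 / a ^ 2) * Real.sin φ ^ 2)
    (hΦ : ∀ φ : ℝ, Φ φ = ∫ t in (0:ℝ)..φ, 1 / C t)
    (φ xw : ℝ → ℝ)
    (hφ : ∀ s : ℝ, φ s = -gv * Real.log s + c₂)
    (hxw : ∀ s : ℝ, xw s = -gw * δv * Real.log s - (gw / 2) * Real.log (C (φ s))
        + Φ (φ s) + c₃ - gw * Real.log c₁) :
    ∀ s : ℝ, 0 < s →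
      HasDerivAt xw
        (-(1 / s) * (gw * δv +
          (gv * gw * (a ^ 2 - 1 / a ^ 2) * Real.sin (φ s) * Real.cos (φ s) + gv)
            / C (φ s))) s ∧
      (deriv xw s = 0 ↔
        Cv * C (φ s) + αv * (a ^ 2 - 1 / a ^ 2) * Real.sin (φ s) * Real.cos (φ s)
          = αv * Ew / αw) := by
  intro s hs
  obtain rfl : C = circleForm (a ^ 2) (1 / a ^ 2) := funext hC
  have hC₀ : ∀ t, circleForm (a ^ 2) (1 / a ^ 2) t ≠ 0 := fun t =>
    (circleForm.pos (by positivity) (by positivity) t).ne'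
  have hlog : HasDerivAt Real.log s⁻¹ s := Real.hasDerivAt_log hs.ne'
  have hφ' : HasDerivAt φ (-gv * s⁻¹) s := by
    rw [funext hφ]
    exact (hlog.const_mul (-gv)).add_const c₂
  have hderiv : HasDerivAt xw (-(1 / s) * (gw * δv +
      (gv * gw * (a ^ 2 - 1 / a ^ 2) * Real.sin (φ s) * Real.cos (φ s) + gv) /
        circleForm (a ^ 2) (1 / a ^ 2) (φ s))) s := by
    have h := ((hlog.const_mul (-gw * δv)).add
      (hasDerivAt_mul_log_comp_add_integral_one_div (-(gw / 2)) 0 (circleForm.continuous _ _) hC₀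
        (circleForm.hasDerivAt _ _ _) hφ')).add_const (c₃ - gw * Real.log c₁)
    refine (h.congr_of_eventuallyEq (.of_forall fun x => ?_)).congr_deriv (by ring)
    simp only [hxw, hΦ, Pi.add_apply]
    ring
  refine ⟨hderiv, ?_⟩
  rw [hderiv.deriv, mul_eq_zero_iff_left (neg_ne_zero.mpr (one_div_ne_zero hs.ne')), hgw, hgv, hδv]
  simpa only [mul_assoc] using neg_div_mul_div_add_div_eq_zero_iff hEv.ne' hEw.ne' hαw.ne'
    (hC₀ (φ s)) αv Cv ((a ^ 2 - 1 / a ^ 2) * (Real.sin (φ s) * Real.cos (φ s)))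
end

section
/- Let E_w, α_w be positive reals and S = √(C_v² + 4α_v²). The equation A(φ) = α_v E_w / α_w has a real solution φ if and only if (a² − 1/a²) · 2α_v/(C_v − S) ≤ E_w/α_w − a² C_v/α_v ≤ (a² − 1/a²) · 2α_v/(C_v + S). -/
/-!
With `D = a² − 1/a² ≥ 0`, the double angle formulas turn `A(φ)` into `C_v a² − (D/2) C_v` plus
`D/2` times the sinusoid `C_v cos 2φ + 2α_v sin 2φ`. A sinusoid `p cos x + q sin x` is a shifted
cosine of amplitude `√(p² + q²)`, so the range of `A` is the interval
`[C_v a² − (D/2)(C_v + S), C_v a² − (D/2)(C_v − S)]`. Dividing by `α_v` and rationalizing with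
`(S − C_v)(S + C_v) = (2α_v)²` gives the stated bounds.
-/

open Real Set

theorem mul_cos_add_mul_sin_eq_sqrt_mul_cos (p q x : ℝ) :
    p * cos x + q * sin x = √(p ^ 2 + q ^ 2) * cos (x - Complex.arg ⟨p, q⟩) := by
  have hp := Complex.norm_mul_cos_arg ⟨p, q⟩
  have hq := Complex.norm_mul_sin_arg ⟨p, q⟩
  rw [Complex.norm_eq_sqrt_sq_add_sq] at hp hq
  rw [cos_sub]
  linear_combination -cos x * hp - sin x * hq

theorem range_mul_cos_add_mul_sin (p q : ℝ) :
    range (fun x ↦ p * cos x + q * sin x) = Icc (-√(p ^ 2 + q ^ 2)) √(p ^ 2 + q ^ 2) := by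
  simp only [mul_cos_add_mul_sin_eq_sqrt_mul_cos]
  set θ := Complex.arg ⟨p, q⟩
  have hcos : range (fun x ↦ cos (x - θ)) = Icc (-1) 1 :=
    ((Equiv.subRight θ).surjective.range_comp cos).trans range_cos
  calc range (fun x ↦ √(p ^ 2 + q ^ 2) * cos (x - θ))
      = (√(p ^ 2 + q ^ 2) * ·) '' range (fun x ↦ cos (x - θ)) := range_comp _ _
    _ = Icc (-√(p ^ 2 + q ^ 2)) √(p ^ 2 + q ^ 2) := by
      rw [hcos, image_mul_left_Icc (sqrt_nonneg _) (by norm_num), mul_neg, mul_one]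

theorem range_quadratic_cos_sin (p q r : ℝ) :
    range (fun φ ↦ p * cos φ ^ 2 + q * sin φ ^ 2 + 2 * r * sin φ * cos φ) =
      Icc ((p + q) / 2 - √(((p - q) / 2) ^ 2 + r ^ 2))
        ((p + q) / 2 + √(((p - q) / 2) ^ 2 + r ^ 2)) := by
  have hdouble (φ : ℝ) : p * cos φ ^ 2 + q * sin φ ^ 2 + 2 * r * sin φ * cos φ =
      (p + q) / 2 + ((p - q) / 2 * cos (2 * φ) + r * sin (2 * φ)) := by
    rw [sin_sq, cos_sq, sin_two_mul]
    ring
  calc range (fun φ ↦ p * cos φ ^ 2 + q * sin φ ^ 2 + 2 * r * sin φ * cos φ)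
      = range (fun φ ↦ (p + q) / 2 + ((p - q) / 2 * cos (2 * φ) + r * sin (2 * φ))) := by
        simp only [hdouble]
    _ = range (fun x ↦ (p + q) / 2 + ((p - q) / 2 * cos x + r * sin x)) :=
        (mul_left_surjective₀ two_ne_zero).range_comp
          fun x ↦ (p + q) / 2 + ((p - q) / 2 * cos x + r * sin x)
    _ = ((p + q) / 2 + ·) '' range (fun x ↦ (p - q) / 2 * cos x + r * sin x) := range_comp _ _
    _ = _ := by
        rw [range_mul_cos_add_mul_sin, image_const_add_Icc, ← sub_eq_add_neg]

theorem range_quadratic_cos_sin_of_sub_eq {c d p q D : ℝ} (hD : 0 ≤ D) (hpq : p - q = c * D) :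
    range (fun φ ↦ p * cos φ ^ 2 + q * sin φ ^ 2 + 2 * d * D * sin φ * cos φ) =
      Icc (p - D / 2 * (c + √(c ^ 2 + 4 * d ^ 2))) (p - D / 2 * (c - √(c ^ 2 + 4 * d ^ 2))) := by
  have hcenter : (p + q) / 2 = p - D / 2 * c := by linear_combination -hpq / 2
  have hradius : √(((p - q) / 2) ^ 2 + (d * D) ^ 2) = D / 2 * √(c ^ 2 + 4 * d ^ 2) := by
    rw [show ((p - q) / 2) ^ 2 + (d * D) ^ 2 = (D / 2) ^ 2 * (c ^ 2 + 4 * d ^ 2) by rw [hpq]; ring,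
      sqrt_mul (sq_nonneg _), sqrt_sq (by positivity)]
  simp only [mul_assoc 2 d D]
  rw [range_quadratic_cos_sin, hcenter, hradius]
  congr 1 <;> ring

theorem div_add_eq_sub_div_of_sq_eq {c b s : ℝ} (hb : b ≠ 0) (hs : s ^ 2 = c ^ 2 + b ^ 2) :
    b / (c + s) = (s - c) / b := by
  have hprod : (s - c) * (c + s) = b * b := by linear_combination hs
  have hne : c + s ≠ 0 := right_ne_zero_of_mul (hprod ▸ mul_ne_zero hb hb)
  rw [div_eq_div_iff hne hb, hprod]

theorem stmt_11_general {a Cv αv E S : ℝ} (ha : 1 ≤ |a|) (hαv : 0 < αv)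
    (hS : S = √(Cv ^ 2 + 4 * αv ^ 2)) :
    (∃ φ : ℝ, Cv * a ^ 2 * cos φ ^ 2 + (Cv / a ^ 2) * sin φ ^ 2
        + 2 * αv * (a ^ 2 - 1 / a ^ 2) * sin φ * cos φ = αv * E) ↔
      ((a ^ 2 - 1 / a ^ 2) * (2 * αv / (Cv - S)) ≤ E - a ^ 2 * Cv / αv ∧
       E - a ^ 2 * Cv / αv ≤ (a ^ 2 - 1 / a ^ 2) * (2 * αv / (Cv + S))) := by
  have ha2 : 1 ≤ a ^ 2 := (one_le_sq_iff_one_le_abs a).mpr ha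
  have hD : 0 ≤ a ^ 2 - 1 / a ^ 2 :=
    sub_nonneg.mpr ((div_le_one_of_le₀ ha2 (sq_nonneg a)).trans ha2)
  have hS2 : S ^ 2 = Cv ^ 2 + (2 * αv) ^ 2 := by
    rw [hS, sq_sqrt (by positivity)]
    ring
  have hb : 2 * αv ≠ 0 := by positivity
  have hlower : 2 * αv / (Cv - S) = (-S - Cv) / (2 * αv) :=
    div_add_eq_sub_div_of_sq_eq hb (by rw [neg_sq, hS2])
  have hupper : 2 * αv / (Cv + S) = (S - Cv) / (2 * αv) := div_add_eq_sub_div_of_sq_eq hb hS2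
  have hrange := range_quadratic_cos_sin_of_sub_eq (c := Cv) (d := αv) (p := Cv * a ^ 2)
    (q := Cv / a ^ 2) hD (by ring)
  rw [← mem_range, hrange, ← hS, mem_Icc, hlower, hupper]
  generalize a ^ 2 - 1 / a ^ 2 = D
  have hmid : E - a ^ 2 * Cv / αv = (αv * E - Cv * a ^ 2) / αv := by field_simp
  have hscale (t : ℝ) : D * (t / (2 * αv)) = D / 2 * t / αv := by field_simp
  rw [hmid, hscale, hscale, div_le_div_iff_of_pos_right hαv, div_le_div_iff_of_pos_right hαv]
  constructor <;> rintro ⟨h₁, h₂⟩ <;> constructor <;> linarith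

/-- Let `E_w, α_w` be positive reals and `S = √(C_v² + 4α_v²)`.
The equation `A(φ) = α_v E_w / α_w` has a real solution `φ` if and only if
`(a² − 1/a²)·2α_v/(C_v − S) ≤ E_w/α_w − a² C_v/α_v ≤ (a² − 1/a²)·2α_v/(C_v + S)`. -/
theorem stmt_11 (a Cv αv Ew αw S : ℝ) (ha : 1 < a) (hCv : 0 < Cv) (hαv : 0 < αv)
    (hEw : 0 < Ew) (hαw : 0 < αw)
    (A : ℝ → ℝ)
    (hA : ∀ φ : ℝ, A φ = Cv * a ^ 2 * Real.cos φ ^ 2 + (Cv / a ^ 2) * Real.sin φ ^ 2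
        + 2 * αv * (a ^ 2 - 1 / a ^ 2) * Real.sin φ * Real.cos φ)
    (hS : S = Real.sqrt (Cv ^ 2 + 4 * αv ^ 2)) :
    (∃ φ : ℝ, A φ = αv * Ew / αw) ↔
      ((a ^ 2 - 1 / a ^ 2) * (2 * αv / (Cv - S)) ≤ Ew / αw - a ^ 2 * Cv / αv ∧
       Ew / αw - a ^ 2 * Cv / αv ≤ (a ^ 2 - 1 / a ^ 2) * (2 * αv / (Cv + S))) := by
  simp only [hA, mul_div_assoc αv Ew αw]
  exact stmt_11_general (ha.le.trans (le_abs_self a)) hαv hS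
end

section
/- For every (x, y) with y > 0, the map η is differentiable at (x, y) and the determinant of its Jacobian equals δ_v δ_w · c₄ · c₁^{δ_w} · y^{δ_v δ_w − 1} · C(ψ(x,y))^{δ_w/2 − 1}. Consequently, if δ_v δ_w > 1 then det Dη(x, y) tends to 0 as y → 0⁺, uniformly in x. -/
/-!
The map `η` factors as `L_w ∘ T ∘ L_v`, where `L(x, y) = (x - g log y + c, d y ^ δ)` and
`T(s, ρ) = (Φ s, ρ √(C s))`. Each factor has a triangular Jacobian matrix, with determinant
`d δ y ^ (δ - 1)` and `√(C s) / C s` respectively, so `C'` never enters and the determinant formula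
is the chain rule. Since `C` takes values in a compact subset of `(0, ∞)`, the factor
`C ^ (δ_w / 2 - 1)` is bounded, and `y ^ (δ_v δ_w - 1)` forces the uniform limit.
-/

open Filter Set Topology

section Jacobian

variable {𝕜 E : Type*} [NontriviallyNormedField 𝕜] [NormedAddCommGroup E] [NormedSpace 𝕜 E]
  {f g : E → E} {J K : 𝕜} {p : E}

variable (𝕜) in
/-- `f` is Fréchet differentiable at `p` and its Jacobian determinant there is `J`. The derivative
is existentially quantified so that determinants can be computed without naming it. -/
def HasJacobianDetAt (f : E → E) (J : 𝕜) (p : E) : Prop :=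
  ∃ D : E →L[𝕜] E, HasFDerivAt f D p ∧ LinearMap.det (D : E →ₗ[𝕜] E) = J

namespace HasJacobianDetAt

lemma comp (hg : HasJacobianDetAt 𝕜 g K (f p)) (hf : HasJacobianDetAt 𝕜 f J p) :
    HasJacobianDetAt 𝕜 (g ∘ f) (K * J) p := by
  obtain ⟨Dg, hDg, rfl⟩ := hg
  obtain ⟨Df, hDf, rfl⟩ := hf
  exact ⟨Dg ∘L Df, hDg.comp p hDf, LinearMap.det_comp _ _⟩

lemma congr_of_eventuallyEq (hf : HasJacobianDetAt 𝕜 f J p) (hgf : g =ᶠ[𝓝 p] f) :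
    HasJacobianDetAt 𝕜 g J p :=
  let ⟨D, hD, hJ⟩ := hf
  ⟨D, hD.congr_of_eventuallyEq hgf, hJ⟩

lemma det_eq (hf : HasJacobianDetAt 𝕜 f J p) {D : E →L[𝕜] E} (hD : HasFDerivAt f D p) :
    LinearMap.det (D : E →ₗ[𝕜] E) = J := by
  obtain ⟨D', hD', rfl⟩ := hf
  rw [hD.unique hD']

end HasJacobianDetAt

lemma hasJacobianDetAt_prodMk {u v : 𝕜 × 𝕜 → 𝕜} {p : 𝕜 × 𝕜} {ux uy vx vy : 𝕜}
    (hu : HasFDerivAt u (ux • ContinuousLinearMap.fst 𝕜 𝕜 𝕜 + uy • .snd 𝕜 𝕜 𝕜) p)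
    (hv : HasFDerivAt v (vx • ContinuousLinearMap.fst 𝕜 𝕜 𝕜 + vy • .snd 𝕜 𝕜 𝕜) p) :
    HasJacobianDetAt 𝕜 (fun q ↦ (u q, v q)) (ux * vy - uy * vx) p := by
  refine ⟨_, hu.prodMk hv, ?_⟩
  rw [← LinearMap.det_toMatrix (Module.Basis.finTwoProd 𝕜), Matrix.det_fin_two]
  simp [LinearMap.toMatrix_apply]

end Jacobian

/-- The passage map `(x, y) ↦ (x - g log y + c, d y ^ δ)` near a saddle-focus, in the angular
coordinate `x` and the distance `y > 0` to the invariant manifold. -/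
noncomputable def localMap (g δ c d : ℝ) (p : ℝ × ℝ) : ℝ × ℝ :=
  (p.1 - g * Real.log p.2 + c, d * p.2 ^ δ)

/-- The transition `(s, ρ) ↦ (Φ s, ρ R(s))` between the two local maps. In `η` it is a linear map
in polar coordinates, with `R = √C`. -/
def transitionMap (Φ R : ℝ → ℝ) (p : ℝ × ℝ) : ℝ × ℝ :=
  (Φ p.1, p.2 * R p.1)

lemma hasJacobianDetAt_localMap (g δ c d x : ℝ) {y : ℝ} (hy : y ≠ 0) :
    HasJacobianDetAt ℝ (localMap g δ c d) (d * (δ * y ^ (δ - 1))) (x, y) := by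
  have hfst : HasFDerivAt (fun p : ℝ × ℝ ↦ p.1) (.fst ℝ ℝ ℝ) (x, y) := hasFDerivAt_fst
  have hsnd : HasFDerivAt (fun p : ℝ × ℝ ↦ p.2) (.snd ℝ ℝ ℝ) (x, y) := hasFDerivAt_snd
  have hangle : HasFDerivAt (fun p : ℝ × ℝ ↦ p.1 - g * Real.log p.2 + c)
      ((1 : ℝ) • .fst ℝ ℝ ℝ + (-(g * y⁻¹)) • .snd ℝ ℝ ℝ) (x, y) :=
    ((hfst.sub ((hsnd.log hy).const_mul g)).add_const c).congr_fderiv (by ext <;> simp)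
  have hdist : HasFDerivAt (fun p : ℝ × ℝ ↦ d * p.2 ^ δ)
      ((0 : ℝ) • .fst ℝ ℝ ℝ + (d * (δ * y ^ (δ - 1))) • .snd ℝ ℝ ℝ) (x, y) :=
    ((hsnd.rpow_const (Or.inl hy)).const_mul d).congr_fderiv (by ext <;> simp)
  have hprod : HasJacobianDetAt ℝ (localMap g δ c d) _ (x, y) :=
    hasJacobianDetAt_prodMk hangle hdist
  simpa using hprod

lemma hasJacobianDetAt_transitionMap {Φ R : ℝ → ℝ} {s Φ' : ℝ} (hΦ : HasDerivAt Φ Φ' s)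
    (hR : DifferentiableAt ℝ R s) (ρ : ℝ) :
    HasJacobianDetAt ℝ (transitionMap Φ R) (Φ' * R s) (s, ρ) := by
  have hfst : HasFDerivAt (fun p : ℝ × ℝ ↦ p.1) (.fst ℝ ℝ ℝ) (s, ρ) := hasFDerivAt_fst
  have hsnd : HasFDerivAt (fun p : ℝ × ℝ ↦ p.2) (.snd ℝ ℝ ℝ) (s, ρ) := hasFDerivAt_snd
  have hangle : HasFDerivAt (fun p : ℝ × ℝ ↦ Φ p.1)
      (Φ' • .fst ℝ ℝ ℝ + (0 : ℝ) • .snd ℝ ℝ ℝ) (s, ρ) :=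
    (hΦ.comp_hasFDerivAt (s, ρ) hfst).congr_fderiv (by simp)
  have hdist : HasFDerivAt (fun p : ℝ × ℝ ↦ p.2 * R p.1)
      ((ρ * deriv R s) • .fst ℝ ℝ ℝ + R s • .snd ℝ ℝ ℝ) (s, ρ) :=
    (hsnd.mul (hR.hasDerivAt.comp_hasFDerivAt (s, ρ) hfst)).congr_fderiv (by ext <;> simp)
  have hprod : HasJacobianDetAt ℝ (transitionMap Φ R) _ (s, ρ) :=
    hasJacobianDetAt_prodMk hangle hdist
  simpa using hprod

section ReturnMap

/-- The first-return map: local map at `v`, transition with radial factor `√C`, local map at `w`.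
It agrees with `η` for `y > 0`; elsewhere the junk values of `log` and `rpow` may differ. -/
noncomputable def returnMap (C Φ : ℝ → ℝ) (gv δv c₂ c₁ gw δw c₃ c₄ : ℝ) : ℝ × ℝ → ℝ × ℝ :=
  localMap gw δw c₃ c₄ ∘ transitionMap Φ (fun s ↦ √(C s)) ∘ localMap gv δv c₂ c₁

variable {C Φ : ℝ → ℝ} {gv c₂ c₁ x y s : ℝ}

lemma returnMap_apply (δv gw δw c₃ c₄ : ℝ) (hc₁ : 0 < c₁) (hy : 0 < y)
    (hs : s = x - gv * Real.log y + c₂) (hC : 0 < C s) :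
    returnMap C Φ gv δv c₂ c₁ gw δw c₃ c₄ (x, y) =
      (-gw * δv * Real.log y - (gw / 2) * Real.log (C s) + Φ s + c₃ - gw * Real.log c₁,
        c₄ * c₁ ^ δw * y ^ (δv * δw) * C s ^ (δw / 2)) := by
  have hyδ : 0 < y ^ δv := Real.rpow_pos_of_pos hy δv
  have hsqrt := Real.sqrt_pos.2 hC
  simp only [returnMap, localMap, transitionMap, Function.comp_apply, Prod.mk.injEq, ← hs]
  constructor
  · rw [Real.log_mul (by positivity) hsqrt.ne', Real.log_mul hc₁.ne' hyδ.ne', Real.log_rpow hy,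
      Real.log_sqrt hC.le]
    ring
  · rw [Real.mul_rpow (by positivity) hsqrt.le, Real.mul_rpow hc₁.le hyδ.le, ← Real.rpow_mul hy.le,
      Real.rpow_div_two_eq_sqrt _ hC.le]
    ring

lemma hasJacobianDetAt_returnMap (δv gw δw c₃ c₄ : ℝ) (hc₁ : 0 < c₁) (hy : 0 < y)
    (hs : s = x - gv * Real.log y + c₂) (hpos : 0 < C s) (hC : DifferentiableAt ℝ C s)
    (hΦ : HasDerivAt Φ (1 / C s) s) :
    HasJacobianDetAt ℝ (returnMap C Φ gv δv c₂ c₁ gw δw c₃ c₄)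
      (δv * δw * c₄ * c₁ ^ δw * y ^ (δv * δw - 1) * C s ^ (δw / 2 - 1)) (x, y) := by
  have hyδ : 0 < y ^ δv := Real.rpow_pos_of_pos hy δv
  have hsqrt := Real.sqrt_pos.2 hpos
  have hρ : 0 < c₁ * y ^ δv * √(C s) := by positivity
  have hdet : c₄ * (δw * (c₁ * y ^ δv * √(C s)) ^ (δw - 1)) *
      (1 / C s * √(C s) * (c₁ * (δv * y ^ (δv - 1)))) =
        δv * δw * c₄ * c₁ ^ δw * y ^ (δv * δw - 1) * C s ^ (δw / 2 - 1) := by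
    rw [Real.rpow_sub_one hρ.ne', Real.rpow_sub_one hy.ne', Real.rpow_sub_one hy.ne',
      Real.rpow_sub_one hpos.ne', Real.mul_rpow (by positivity) hsqrt.le,
      Real.mul_rpow hc₁.le hyδ.le, ← Real.rpow_mul hy.le, Real.rpow_div_two_eq_sqrt _ hpos.le]
    field_simp
  rw [← hdet]
  subst hs
  exact (hasJacobianDetAt_localMap gw δw c₃ c₄ _ hρ.ne').comp
    ((hasJacobianDetAt_transitionMap hΦ (hC.sqrt hpos.ne') _).comp
      (hasJacobianDetAt_localMap gv δv c₂ c₁ x hy.ne'))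

end ReturnMap

lemma tendstoUniformly_mul_zero_of_bounded {ι α R : Type*} [NonUnitalSeminormedRing R]
    {l : Filter ι} {u : ι → R} {f : ι → α → R} {B : ℝ} (hu : Tendsto u l (𝓝 0))
    (hf : ∀ i a, ‖f i a‖ ≤ B) : TendstoUniformly (fun i a ↦ u i * f i a) 0 l := by
  have hbdd : IsBoundedUnder (· ≤ ·) (l ×ˢ ⊤) (norm ∘ fun q : ι × α ↦ f q.1 q.2) :=
    isBoundedUnder_of ⟨B, fun q ↦ hf q.1 q.2⟩
  exact tendsto_prod_top_iff.1 ((hu.comp tendsto_fst).zero_mul_isBoundedUnder_le hbdd)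

lemma mul_cos_sq_add_mul_sin_sq_mem_uIcc (p q φ : ℝ) :
    p * Real.cos φ ^ 2 + q * Real.sin φ ^ 2 ∈ uIcc p q := by
  have h := convex_uIcc p q left_mem_uIcc right_mem_uIcc (sq_nonneg (Real.cos φ))
    (sq_nonneg (Real.sin φ)) (Real.cos_sq_add_sin_sq φ)
  simpa only [smul_eq_mul, mul_comm] using h

lemma hasDerivAt_integral_one_div {C : ℝ → ℝ} (hC : Continuous C) (h0 : ∀ t, C t ≠ 0) (b s : ℝ) :
    HasDerivAt (fun φ ↦ ∫ t in b..φ, 1 / C t) (1 / C s) s :=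
  ((continuous_const.div hC h0).integral_hasStrictDerivAt b s).hasDerivAt

theorem stmt_13_general (δv gv δw gw c₁ c₂ c₃ c₄ : ℝ) (hc₁ : 0 < c₁) {m M : ℝ} (hm : 0 < m)
    (C Φ : ℝ → ℝ) (hCmem : ∀ s, C s ∈ Icc m M) (hC : Differentiable ℝ C)
    (hΦ : ∀ s, HasDerivAt Φ (1 / C s) s)
    (ψ : ℝ × ℝ → ℝ) (hψ : ∀ p : ℝ × ℝ, ψ p = p.1 - gv * Real.log p.2 + c₂)
    (η : ℝ × ℝ → ℝ × ℝ)
    (hη : ∀ p : ℝ × ℝ, η p =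
      (-gw * δv * Real.log p.2 - (gw / 2) * Real.log (C (ψ p)) + Φ (ψ p)
          + c₃ - gw * Real.log c₁,
       c₄ * c₁ ^ δw * p.2 ^ (δv * δw) * C (ψ p) ^ (δw / 2))) :
    (∀ x y : ℝ, 0 < y →
      ∃ D : ℝ × ℝ →L[ℝ] ℝ × ℝ,
        HasFDerivAt η D (x, y) ∧
        LinearMap.det (D : ℝ × ℝ →ₗ[ℝ] ℝ × ℝ) =
          δv * δw * c₄ * c₁ ^ δw * y ^ (δv * δw - 1) *
            C (ψ (x, y)) ^ (δw / 2 - 1)) ∧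
    (1 < δv * δw →
      ∀ ε' : ℝ, 0 < ε' → ∃ δ' : ℝ, 0 < δ' ∧
        ∀ x y : ℝ, 0 < y → y < δ' →
          ∀ D : ℝ × ℝ →L[ℝ] ℝ × ℝ, HasFDerivAt η D (x, y) →
            |LinearMap.det (D : ℝ × ℝ →ₗ[ℝ] ℝ × ℝ)| < ε') := by
  have hpos s : 0 < C s := hm.trans_le (hCmem s).1
  have hdet (x y : ℝ) (hy : 0 < y) : HasJacobianDetAt ℝ η
      (δv * δw * c₄ * c₁ ^ δw * y ^ (δv * δw - 1) * C (ψ (x, y)) ^ (δw / 2 - 1)) (x, y) := by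
    refine (hasJacobianDetAt_returnMap δv gw δw c₃ c₄ hc₁ hy
      (hψ _) (hpos _) (hC _) (hΦ _)).congr_of_eventuallyEq ?_
    filter_upwards [continuousAt_snd.eventually_const_lt hy] with p hp
    rw [hη]
    exact (returnMap_apply δv gw δw c₃ c₄ hc₁ hp (hψ p) (hpos _)).symm
  refine ⟨hdet, fun hδ ε' hε' ↦ ?_⟩
  obtain ⟨B, hB⟩ := isCompact_Icc.exists_bound_of_continuousOn (f := fun t : ℝ ↦ t ^ (δw / 2 - 1))
    (continuousOn_id.rpow_const fun t ht ↦ Or.inl (hm.trans_le (mem_Icc.1 ht).1).ne')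
  have hlim : Tendsto (fun y : ℝ ↦ δv * δw * c₄ * c₁ ^ δw * y ^ (δv * δw - 1)) (𝓝[>] 0) (𝓝 0) := by
    have hexp : 0 < δv * δw - 1 := sub_pos.2 hδ
    exact ((Real.continuous_rpow_const hexp.le).const_mul _).tendsto' 0 0
      (by simp [hexp.ne']) |>.mono_left nhdsWithin_le_nhds
  have hunif := tendstoUniformly_mul_zero_of_bounded hlim
    (f := fun y x ↦ C (ψ (x, y)) ^ (δw / 2 - 1)) fun y x ↦ hB _ (hCmem _)
  obtain ⟨δ', hδ', hlt⟩ :=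
    (nhdsGT_basis 0).eventually_iff.1 (Metric.tendstoUniformly_iff.1 hunif ε' hε')
  refine ⟨δ', hδ', fun x y hy hyδ D hD ↦ ?_⟩
  rw [(hdet x y hy).det_eq hD]
  simpa using hlt ⟨hy, hyδ⟩ x

/-- For every `(x, y)` with `y > 0`, the map `η` is differentiable
at `(x, y)` and the determinant of its Jacobian equals
`δ_v δ_w · c₄ · c₁^{δ_w} · y^{δ_v δ_w − 1} · C(ψ(x,y))^{δ_w/2 − 1}`.
Consequently, if `δ_v δ_w > 1` then `det Dη(x, y)` tends to `0` as `y → 0⁺`,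
uniformly in `x`. -/
theorem stmt_13 (a Cv Ev αv Cw Ew αw ε : ℝ)
    (ha : 0 < a) (hCv : 0 < Cv) (hEv : 0 < Ev) (hαv : 0 < αv)
    (hCw : 0 < Cw) (hEw : 0 < Ew) (hαw : 0 < αw) (hε : 0 < ε)
    (δv gv δw gw c₁ c₂ c₃ c₄ : ℝ)
    (hδv : δv = Cv / Ev) (hgv : gv = αv / Ev)
    (hδw : δw = Cw / Ew) (hgw : gw = -(αw / Ew))
    (hc₁ : c₁ = ε ^ (1 - δv)) (hc₂ : c₂ = gv * Real.log ε)
    (hc₃ : c₃ = gw * Real.log ε) (hc₄ : c₄ = ε ^ (1 - δw))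
    (C Φ : ℝ → ℝ)
    (hC : ∀ φ : ℝ, C φ = a ^ 2 * Real.cos φ ^ 2 + (1 / a ^ 2) * Real.sin φ ^ 2)
    (hΦ : ∀ φ : ℝ, Φ φ = ∫ t in (0:ℝ)..φ, 1 / C t)
    (ψ : ℝ × ℝ → ℝ)
    (hψ : ∀ p : ℝ × ℝ, ψ p = p.1 - gv * Real.log p.2 + c₂)
    (η : ℝ × ℝ → ℝ × ℝ)
    (hη : ∀ p : ℝ × ℝ, η p =
      (-gw * δv * Real.log p.2 - (gw / 2) * Real.log (C (ψ p)) + Φ (ψ p)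
          + c₃ - gw * Real.log c₁,
       c₄ * c₁ ^ δw * p.2 ^ (δv * δw) * C (ψ p) ^ (δw / 2))) :
    (∀ x y : ℝ, 0 < y →
      ∃ D : ℝ × ℝ →L[ℝ] ℝ × ℝ,
        HasFDerivAt η D (x, y) ∧
        LinearMap.det (D : ℝ × ℝ →ₗ[ℝ] ℝ × ℝ) =
          δv * δw * c₄ * c₁ ^ δw * y ^ (δv * δw - 1) *
            C (ψ (x, y)) ^ (δw / 2 - 1)) ∧
    (1 < δv * δw →
      ∀ ε' : ℝ, 0 < ε' → ∃ δ' : ℝ, 0 < δ' ∧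
        ∀ x y : ℝ, 0 < y → y < δ' →
          ∀ D : ℝ × ℝ →L[ℝ] ℝ × ℝ, HasFDerivAt η D (x, y) →
            |LinearMap.det (D : ℝ × ℝ →ₗ[ℝ] ℝ × ℝ)| < ε') := by
  obtain rfl : C = _ := funext hC
  obtain rfl : Φ = _ := funext hΦ
  have hm : 0 < min (a ^ 2) (1 / a ^ 2) := by positivity
  have hCmem := mul_cos_sq_add_mul_sin_sq_mem_uIcc (a ^ 2) (1 / a ^ 2)
  have hC₀ (t : ℝ) := (hm.trans_le (hCmem t).1).ne'
  exact stmt_13_general δv gv δw gw c₁ c₂ c₃ c₄ (hc₁ ▸ Real.rpow_pos_of_pos hε _) hm _ _ hCmem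
    (by fun_prop) (hasDerivAt_integral_one_div (by fun_prop) hC₀ 0) ψ hψ η hη
end

section
/- For all real parameters α₁, α₂, λ and every X ∈ ℝ⁴, the Euclidean inner product of X with f_λ(X) satisfies ⟨X, f_λ(X)⟩ = ‖X‖²(1 − ‖X‖²). In particular ⟨X, f_λ(X)⟩ = 0 whenever ‖X‖ = 1, ⟨X, f_λ(X)⟩ > 0 whenever 0 < ‖X‖ < 1, and ⟨X, f_λ(X)⟩ < 0 whenever ‖X‖ > 1. -/
open RealInnerProductSpace

/-!
The field splits as `f_λ(X) = (1 - ‖X‖²) X + A(X) X` with a skew-symmetric matrix `A(X)`.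
Skew-symmetry makes `A(X) X` orthogonal to `X`, so only the radial part contributes to
`⟪X, f_λ(X)⟫`.
-/

theorem inner_smul_self_add_of_inner_eq_zero {E : Type*} [SeminormedAddCommGroup E]
    [InnerProductSpace ℝ E] {x v : E} (hxv : ⟪x, v⟫ = 0) (c : ℝ) :
    ⟪x, c • x + v⟫ = ‖x‖ ^ 2 * c := by
  rw [inner_add_right, hxv, add_zero, real_inner_smul_right, real_inner_self_eq_norm_sq, mul_comm]

section SkewSymmetric

open Matrix

theorem dotProduct_mulVec_self_eq_zero_of_transpose_eq_neg {n R : Type*} [Fintype n]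
    [NonUnitalCommRing R] [IsAddTorsionFree R] {A : Matrix n n R} (hA : Aᵀ = -A) (v : n → R) :
    v ⬝ᵥ A *ᵥ v = 0 := by
  rw [← self_eq_neg]
  calc
    v ⬝ᵥ A *ᵥ v = v ⬝ᵥ Aᵀ *ᵥ v := (A.dotProduct_transpose_mulVec v v).symm
    _ = -(v ⬝ᵥ A *ᵥ v) := by rw [hA, neg_mulVec, dotProduct_neg]

theorem inner_toEuclideanCLM_self_eq_zero_of_transpose_eq_neg {n : Type*} [Fintype n]
    [DecidableEq n] {A : Matrix n n ℝ} (hA : Aᵀ = -A) (x : EuclideanSpace ℝ n) :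
    ⟪x, toEuclideanCLM (𝕜 := ℝ) A x⟫ = 0 := by
  rw [inner_toEuclideanCLM]
  exact dotProduct_mulVec_self_eq_zero_of_transpose_eq_neg hA x.ofLp

/-- The skew-symmetric matrix `A(x)` for which `A(x) x` is the non-radial part of `f_λ(x)`.
The rotation of the `(x₁, x₂)`-plane gives the entries `∓x₄`, and the terms in `α₁`, `α₂`, `λ` are
collected in the last row and column; such an `A` is not unique. -/
def tangentialMatrix {R : Type*} [CommRing R] (α₁ α₂ lam : R) (x : Fin 4 → R) :
    Matrix (Fin 4) (Fin 4) R :=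
  !![0, -x 3, 0, α₂ * x 0 * x 3 - α₁ * x 0;
     x 3, 0, 0, α₂ * x 1 * x 3 - α₁ * x 1;
     0, 0, 0, α₁ * x 2 + α₂ * x 2 * x 3 + lam * x 0 * x 1;
     α₁ * x 0 - α₂ * x 0 * x 3, α₁ * x 1 - α₂ * x 1 * x 3,
       -(α₁ * x 2 + α₂ * x 2 * x 3 + lam * x 0 * x 1), 0]

theorem tangentialMatrix_transpose {R : Type*} [CommRing R] (α₁ α₂ lam : R) (x : Fin 4 → R) :
    (tangentialMatrix α₁ α₂ lam x)ᵀ = -tangentialMatrix α₁ α₂ lam x := by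
  ext i j
  fin_cases i <;> fin_cases j <;> simp [tangentialMatrix]

theorem tangentialMatrix_mulVec_self {R : Type*} [CommRing R] (α₁ α₂ lam : R) (x : Fin 4 → R) :
    tangentialMatrix α₁ α₂ lam x *ᵥ x =
      ![-x 3 * x 1 - α₁ * x 0 * x 3 + α₂ * x 0 * x 3 ^ 2,
        x 3 * x 0 - α₁ * x 1 * x 3 + α₂ * x 1 * x 3 ^ 2,
        α₁ * x 2 * x 3 + α₂ * x 2 * x 3 ^ 2 + lam * x 0 * x 1 * x 3,
        -α₁ * (x 2 ^ 2 - x 0 ^ 2 - x 1 ^ 2) - α₂ * x 3 * (x 0 ^ 2 + x 1 ^ 2 + x 2 ^ 2) -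
          lam * x 0 * x 1 * x 2] := by
  ext i
  fin_cases i <;>
    simp only [tangentialMatrix, mulVec, dotProduct, Fin.sum_univ_four, Fin.zero_eta, Fin.mk_one,
      Fin.reduceFinMk, of_apply, cons_val] <;>
    ring

end SkewSymmetric

/-- For all real parameters `α₁, α₂, λ` and every `X ∈ ℝ⁴`, the
Euclidean inner product of `X` with `f_λ(X)` satisfies
`⟨X, f_λ(X)⟩ = ‖X‖²(1 − ‖X‖²)`. In particular `⟨X, f_λ(X)⟩ = 0` whenever
`‖X‖ = 1`, `⟨X, f_λ(X)⟩ > 0` whenever `0 < ‖X‖ < 1`, and `⟨X, f_λ(X)⟩ < 0`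
whenever `‖X‖ > 1`. -/
theorem stmt_14 (α₁ α₂ lam : ℝ)
    (f : EuclideanSpace ℝ (Fin 4) → EuclideanSpace ℝ (Fin 4))
    (hf : ∀ X : EuclideanSpace ℝ (Fin 4),
      f X 0 = X 0 * (1 - (X 0 ^ 2 + X 1 ^ 2 + X 2 ^ 2 + X 3 ^ 2))
          - X 3 * X 1 - α₁ * X 0 * X 3 + α₂ * X 0 * X 3 ^ 2 ∧
      f X 1 = X 1 * (1 - (X 0 ^ 2 + X 1 ^ 2 + X 2 ^ 2 + X 3 ^ 2))
          + X 3 * X 0 - α₁ * X 1 * X 3 + α₂ * X 1 * X 3 ^ 2 ∧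
      f X 2 = X 2 * (1 - (X 0 ^ 2 + X 1 ^ 2 + X 2 ^ 2 + X 3 ^ 2))
          + α₁ * X 2 * X 3 + α₂ * X 2 * X 3 ^ 2 + lam * X 0 * X 1 * X 3 ∧
      f X 3 = X 3 * (1 - (X 0 ^ 2 + X 1 ^ 2 + X 2 ^ 2 + X 3 ^ 2))
          - α₁ * (X 2 ^ 2 - X 0 ^ 2 - X 1 ^ 2)
          - α₂ * X 3 * (X 0 ^ 2 + X 1 ^ 2 + X 2 ^ 2) - lam * X 0 * X 1 * X 2) :
    ∀ X : EuclideanSpace ℝ (Fin 4),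
      ⟪X, f X⟫ = ‖X‖ ^ 2 * (1 - ‖X‖ ^ 2) ∧
      (‖X‖ = 1 → ⟪X, f X⟫ = 0) ∧
      (0 < ‖X‖ → ‖X‖ < 1 → 0 < ⟪X, f X⟫) ∧
      (1 < ‖X‖ → ⟪X, f X⟫ < 0) := by
  intro X
  let A := tangentialMatrix α₁ α₂ lam X.ofLp
  have field_eq : f X = (1 - ‖X‖ ^ 2) • X + Matrix.toEuclideanCLM (𝕜 := ℝ) A X := by
    obtain ⟨h₀, h₁, h₂, h₃⟩ := hf X
    ext i
    rw [PiLp.add_apply, PiLp.smul_apply, smul_eq_mul, Matrix.ofLp_toEuclideanCLM,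
      tangentialMatrix_mulVec_self, EuclideanSpace.real_norm_sq_eq, Fin.sum_univ_four]
    fin_cases i <;>
      simp only [Fin.zero_eta, Fin.mk_one, Fin.reduceFinMk, Matrix.cons_val, h₀, h₁, h₂, h₃] <;>
      ring
  have inner_tangential : ⟪X, Matrix.toEuclideanCLM (𝕜 := ℝ) A X⟫ = 0 :=
    inner_toEuclideanCLM_self_eq_zero_of_transpose_eq_neg
      (tangentialMatrix_transpose α₁ α₂ lam X.ofLp) X
  rw [field_eq, inner_smul_self_add_of_inner_eq_zero inner_tangential]
  refine ⟨rfl, fun norm_eq_one => ?_, fun norm_pos norm_lt_one => ?_, fun one_lt_norm => ?_⟩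
  · rw [norm_eq_one, one_pow, sub_self, mul_zero]
  · exact mul_pos (pow_pos norm_pos 2)
      (sub_pos.2 (pow_lt_one₀ norm_pos.le norm_lt_one two_ne_zero))
  · exact mul_neg_of_pos_of_neg (pow_pos (one_pos.trans one_lt_norm) 2)
      (sub_neg.2 (one_lt_pow₀ one_lt_norm two_ne_zero))
end

section
/- For all real parameters α₁, α₂, λ and for each ε ∈ {1, −1}: the point (0,0,0,ε) is an equilibrium, i.e. f_λ(0,0,0,ε) = 0, and the Jacobian matrix of f_λ at (0,0,0,ε) has characteristic polynomial (t + 2) · (t − (α₂ + εα₁)) · ( (t − (α₂ − εα₁))² + 1 ); equivalently, its complex eigenvalues are α₂ − εα₁ ± i, α₂ + εα₁ and −2. -/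
/-!
On the whole `x₄`-axis the Jacobian matrix is block diagonal and does not involve `λ`, whose terms
vanish there to second order: at `(0, 0, 0, s)` it consists of a `2 × 2` rotation–scaling block,
with complex eigenvalues `1 - s² - α₁ s + α₂ s² ± i s`, and the two scalars
`1 - s² + α₁ s + α₂ s²` and `1 - 3 s²`. At the equilibria `s² = 1`, so these become
`α₂ - s α₁ ± i s`, `α₂ + s α₁` and `-2`.
-/

section Charpoly

open Polynomial

variable {R : Type*} [CommRing R]

lemma charpoly_rotation_scaling (a s : R) :
    Matrix.charpoly !![a, -s; s, a] = (X - C a) ^ 2 + C (s ^ 2) := by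
  simp only [Matrix.charpoly, Matrix.det_fin_two, Matrix.charmatrix_apply, Matrix.of_apply,
    Matrix.cons_val', Matrix.cons_val_zero, Matrix.cons_val_one, Matrix.cons_val_fin_one,
    Matrix.diagonal_apply, ↓reduceIte, zero_ne_one, one_ne_zero, C_neg, C_pow]
  ring

lemma charpoly_block_diagonal_two_one_one (a b c d p q : R) :
    Matrix.charpoly !![a, b, 0, 0; c, d, 0, 0; 0, 0, p, 0; 0, 0, 0, q] =
      Matrix.charpoly !![a, b; c, d] * ((X - C p) * (X - C q)) := by
  have hblocks : !![a, b, 0, 0; c, d, 0, 0; 0, 0, p, 0; 0, 0, 0, q] =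
      Matrix.reindex finSumFinEquiv finSumFinEquiv
        (Matrix.fromBlocks !![a, b; c, d] 0 0 (Matrix.diagonal ![p, q])) := by
    ext i j
    fin_cases i <;> fin_cases j <;> rfl
  rw [hblocks, Matrix.charpoly_reindex, Matrix.charpoly_fromBlocks_zero₁₂,
    Matrix.charpoly_diagonal, Fin.prod_univ_two]
  rfl

end Charpoly

section VectorField

open Polynomial

variable {R : Type*} [CommRing R]

/-- The vector field `f_λ` of the theorem, with `lam` for `λ` and coordinates `x₁, …, x₄` numbered
from `0`; over a general ring, since the algebra of its Jacobian matrix is purely formal. -/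
def cubicVectorField (α₁ α₂ lam : R) (x : Fin 4 → R) : Fin 4 → R :=
  ![x 0 * (1 - (x 0 ^ 2 + x 1 ^ 2 + x 2 ^ 2 + x 3 ^ 2))
      - x 3 * x 1 - α₁ * x 0 * x 3 + α₂ * x 0 * x 3 ^ 2,
    x 1 * (1 - (x 0 ^ 2 + x 1 ^ 2 + x 2 ^ 2 + x 3 ^ 2))
      + x 3 * x 0 - α₁ * x 1 * x 3 + α₂ * x 1 * x 3 ^ 2,
    x 2 * (1 - (x 0 ^ 2 + x 1 ^ 2 + x 2 ^ 2 + x 3 ^ 2))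
      + α₁ * x 2 * x 3 + α₂ * x 2 * x 3 ^ 2 + lam * x 0 * x 1 * x 3,
    x 3 * (1 - (x 0 ^ 2 + x 1 ^ 2 + x 2 ^ 2 + x 3 ^ 2))
      - α₁ * (x 2 ^ 2 - x 0 ^ 2 - x 1 ^ 2)
      - α₂ * x 3 * (x 0 ^ 2 + x 1 ^ 2 + x 2 ^ 2) - lam * x 0 * x 1 * x 2]

/-- The matrix of formal partial derivatives of `cubicVectorField` at `x`, row `i` belonging to the
`i`-th component. The first two summands come from the radial part `(1 - r²) x`. -/
def cubicVectorFieldJacobian (α₁ α₂ lam : R) (x : Fin 4 → R) : Matrix (Fin 4) (Fin 4) R :=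
  (1 - (x 0 ^ 2 + x 1 ^ 2 + x 2 ^ 2 + x 3 ^ 2)) • 1 - (2 : R) • Matrix.vecMulVec x x +
    !![-α₁ * x 3 + α₂ * x 3 ^ 2, -x 3, 0, -x 1 - α₁ * x 0 + 2 * α₂ * x 0 * x 3;
      x 3, -α₁ * x 3 + α₂ * x 3 ^ 2, 0, x 0 - α₁ * x 1 + 2 * α₂ * x 1 * x 3;
      lam * x 1 * x 3, lam * x 0 * x 3, α₁ * x 3 + α₂ * x 3 ^ 2,
        α₁ * x 2 + 2 * α₂ * x 2 * x 3 + lam * x 0 * x 1;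
      2 * α₁ * x 0 - 2 * α₂ * x 0 * x 3 - lam * x 1 * x 2,
        2 * α₁ * x 1 - 2 * α₂ * x 1 * x 3 - lam * x 0 * x 2,
        -2 * α₁ * x 2 - 2 * α₂ * x 2 * x 3 - lam * x 0 * x 1,
        -α₂ * (x 0 ^ 2 + x 1 ^ 2 + x 2 ^ 2)]

lemma cubicVectorField_axis (α₁ α₂ lam s : R) :
    cubicVectorField α₁ α₂ lam ![0, 0, 0, s] = ![0, 0, 0, s * (1 - s ^ 2)] := by
  ext i
  fin_cases i <;> simp [cubicVectorField]

lemma cubicVectorFieldJacobian_axis (α₁ α₂ lam s : R) :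
    cubicVectorFieldJacobian α₁ α₂ lam ![0, 0, 0, s] =
      !![1 - s ^ 2 - α₁ * s + α₂ * s ^ 2, -s, 0, 0;
        s, 1 - s ^ 2 - α₁ * s + α₂ * s ^ 2, 0, 0;
        0, 0, 1 - s ^ 2 + α₁ * s + α₂ * s ^ 2, 0;
        0, 0, 0, 1 - 3 * s ^ 2] := by
  ext i j
  fin_cases i <;> fin_cases j <;> simp [cubicVectorFieldJacobian, Matrix.vecMulVec] <;> ring

lemma charpoly_cubicVectorFieldJacobian_axis (α₁ α₂ lam s : R) :
    (cubicVectorFieldJacobian α₁ α₂ lam ![0, 0, 0, s]).charpoly =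
      (X - C (1 - 3 * s ^ 2)) * (X - C (1 - s ^ 2 + α₁ * s + α₂ * s ^ 2)) *
        ((X - C (1 - s ^ 2 - α₁ * s + α₂ * s ^ 2)) ^ 2 + C (s ^ 2)) := by
  rw [cubicVectorFieldJacobian_axis, charpoly_block_diagonal_two_one_one,
    charpoly_rotation_scaling]
  ring

lemma charpoly_cubicVectorFieldJacobian_of_sq_eq_one (α₁ α₂ lam : R) {s : R} (hs : s ^ 2 = 1) :
    (cubicVectorFieldJacobian α₁ α₂ lam ![0, 0, 0, s]).charpoly =
      (X + 2) * (X - C (α₂ + s * α₁)) * ((X - C (α₂ - s * α₁)) ^ 2 + 1) := by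
  have hradial : 1 - 3 * s ^ 2 = -2 := by rw [hs]; ring
  have hplus : 1 - s ^ 2 + α₁ * s + α₂ * s ^ 2 = α₂ + s * α₁ := by rw [hs]; ring
  have hminus : 1 - s ^ 2 - α₁ * s + α₂ * s ^ 2 = α₂ - s * α₁ := by rw [hs]; ring
  rw [charpoly_cubicVectorFieldJacobian_axis, hradial, hplus, hminus, hs, C_neg, C_ofNat,
    sub_neg_eq_add, C_1]

end VectorField

section Derivative

variable {𝕜 : Type*} [NontriviallyNormedField 𝕜] [CompleteSpace 𝕜]

lemma eq_of_hasFDerivAt_mulVecLin {m n : Type*} [Fintype n]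
    {f : (n → 𝕜) → (m → 𝕜)} {x : n → 𝕜} {A B : Matrix m n 𝕜}
    (hA : HasFDerivAt f A.mulVecLin.toContinuousLinearMap x)
    (hB : HasFDerivAt f B.mulVecLin.toContinuousLinearMap x) : A = B :=
  Matrix.mulVec_injective <| funext fun v ↦ DFunLike.congr_fun (hA.unique hB) v

lemma hasFDerivAt_cubicVectorField (α₁ α₂ lam : 𝕜) (x : Fin 4 → 𝕜) :
    HasFDerivAt (cubicVectorField α₁ α₂ lam)
      (cubicVectorFieldJacobian α₁ α₂ lam x).mulVecLin.toContinuousLinearMap x := by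
  have hx (i : Fin 4) :
      HasFDerivAt (fun y : Fin 4 → 𝕜 ↦ y i) (ContinuousLinearMap.proj (R := 𝕜) i) x :=
    hasFDerivAt_apply i x
  have hsq (i : Fin 4) := (hx i).pow 2
  have hradial (i : Fin 4) := (hx i).fun_mul
    (((((hsq 0).fun_add (hsq 1)).fun_add (hsq 2)).fun_add (hsq 3)).const_sub 1)
  have hcomp₀ := (((hradial 0).fun_sub ((hx 3).fun_mul (hx 1))).fun_sub
    (((hx 0).const_mul α₁).fun_mul (hx 3))).fun_add (((hx 0).const_mul α₂).fun_mul (hsq 3))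
  have hcomp₁ := (((hradial 1).fun_add ((hx 3).fun_mul (hx 0))).fun_sub
    (((hx 1).const_mul α₁).fun_mul (hx 3))).fun_add (((hx 1).const_mul α₂).fun_mul (hsq 3))
  have hcomp₂ := (((hradial 2).fun_add (((hx 2).const_mul α₁).fun_mul (hx 3))).fun_add
    (((hx 2).const_mul α₂).fun_mul (hsq 3))).fun_add
    ((((hx 0).const_mul lam).fun_mul (hx 1)).fun_mul (hx 3))
  have hcomp₃ := (((hradial 3).fun_sub
    ((((hsq 2).fun_sub (hsq 0)).fun_sub (hsq 1)).const_mul α₁)).fun_sub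
    (((hx 3).const_mul α₂).fun_mul (((hsq 0).fun_add (hsq 1)).fun_add (hsq 2)))).fun_sub
    ((((hx 0).const_mul lam).fun_mul (hx 1)).fun_mul (hx 2))
  refine hasFDerivAt_pi'.2 fun i ↦ ?_
  fin_cases i
  map_tacs [refine hcomp₀.congr_fderiv ?_; refine hcomp₁.congr_fderiv ?_;
    refine hcomp₂.congr_fderiv ?_; refine hcomp₃.congr_fderiv ?_]
  all_goals
    ext v
    simp [cubicVectorFieldJacobian, Matrix.vecMulVec, Matrix.mulVec, dotProduct,
      Fin.sum_univ_succ]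
    ring

theorem stmt_15_general (α₁ α₂ lam : 𝕜) {e : 𝕜} (he : e = 1 ∨ e = -1)
    {J : Matrix (Fin 4) (Fin 4) 𝕜}
    (hJ : HasFDerivAt (cubicVectorField α₁ α₂ lam) J.mulVecLin.toContinuousLinearMap
      ![0, 0, 0, e]) :
    cubicVectorField α₁ α₂ lam ![0, 0, 0, e] = 0 ∧
    J.charpoly =
      (Polynomial.X + 2) * (Polynomial.X - Polynomial.C (α₂ + e * α₁)) *
        ((Polynomial.X - Polynomial.C (α₂ - e * α₁)) ^ 2 + 1) := by
  have he_sq : e ^ 2 = 1 := sq_eq_one_iff.2 he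
  have hJ_eq : J = cubicVectorFieldJacobian α₁ α₂ lam ![0, 0, 0, e] :=
    eq_of_hasFDerivAt_mulVecLin hJ (hasFDerivAt_cubicVectorField α₁ α₂ lam _)
  constructor
  · simp [cubicVectorField_axis, he_sq]
  · rw [hJ_eq, charpoly_cubicVectorFieldJacobian_of_sq_eq_one α₁ α₂ lam he_sq]

end Derivative

/-- For all real parameters `α₁, α₂, λ` and each `ε ∈ {1, −1}`:
the point `(0,0,0,ε)` is an equilibrium, i.e. `f_λ(0,0,0,ε) = 0`, and the
Jacobian matrix of `f_λ` at `(0,0,0,ε)` (the matrix of the Fréchet derivative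
there) has characteristic polynomial
`(t + 2)·(t − (α₂ + εα₁))·((t − (α₂ − εα₁))² + 1)`. -/
theorem stmt_15 (α₁ α₂ lam : ℝ)
    (f : (Fin 4 → ℝ) → (Fin 4 → ℝ))
    (hf : ∀ X : Fin 4 → ℝ, f X =
      ![X 0 * (1 - (X 0 ^ 2 + X 1 ^ 2 + X 2 ^ 2 + X 3 ^ 2))
          - X 3 * X 1 - α₁ * X 0 * X 3 + α₂ * X 0 * X 3 ^ 2,
        X 1 * (1 - (X 0 ^ 2 + X 1 ^ 2 + X 2 ^ 2 + X 3 ^ 2))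
          + X 3 * X 0 - α₁ * X 1 * X 3 + α₂ * X 1 * X 3 ^ 2,
        X 2 * (1 - (X 0 ^ 2 + X 1 ^ 2 + X 2 ^ 2 + X 3 ^ 2))
          + α₁ * X 2 * X 3 + α₂ * X 2 * X 3 ^ 2 + lam * X 0 * X 1 * X 3,
        X 3 * (1 - (X 0 ^ 2 + X 1 ^ 2 + X 2 ^ 2 + X 3 ^ 2))
          - α₁ * (X 2 ^ 2 - X 0 ^ 2 - X 1 ^ 2)
          - α₂ * X 3 * (X 0 ^ 2 + X 1 ^ 2 + X 2 ^ 2) - lam * X 0 * X 1 * X 2])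
    (e : ℝ) (he : e = 1 ∨ e = -1)
    (J : Matrix (Fin 4) (Fin 4) ℝ)
    (hJ : HasFDerivAt f
      (LinearMap.toContinuousLinearMap (Matrix.mulVecLin J)) ![0, 0, 0, e]) :
    f ![0, 0, 0, e] = 0 ∧
    Matrix.charpoly J =
      (Polynomial.X + 2) * (Polynomial.X - Polynomial.C (α₂ + e * α₁)) *
        ((Polynomial.X - Polynomial.C (α₂ - e * α₁)) ^ 2 + 1) := by
  obtain rfl : f = cubicVectorField α₁ α₂ lam := funext hf
  exact stmt_15_general α₁ α₂ lam he hJ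
end

section
/- For all real parameters α₁, α₂, λ: the vector field f_λ is equivariant under the reflection κ̃₂(x₁,x₂,x₃,x₄) = (x₁,x₂,−x₃,x₄) — i.e. f_λ(κ̃₂(X)) = κ̃₂(f_λ(X)) for every X ∈ ℝ⁴ — if and only if λ = 0. In particular, for λ = 0 the hyperplane {x₃ = 0} is invariant (the third component of f₀(X) vanishes whenever x₃ = 0), while for λ ≠ 0 there exists X with x₃ = 0 whose image under f_λ has nonzero third component. -/
/-! At a point fixed by a reflection `κ`, an equivariant field takes a value fixed by `κ`, while an
anti-equivariant field takes a value negated by `κ`. Hence their sum can preserve the fixed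
hyperplane only where the anti-equivariant part vanishes. The field `f_λ` is `f₀ + λ g` with `f₀`
equivariant and `g(x₁, x₂, x₃, x₄) = (0, 0, x₁x₂x₄, -x₁x₂x₃)` anti-equivariant, and
`g(1, 1, 0, 1) ≠ 0`. -/

open Function Set

section AntiEquivariantPerturbation

variable {R V : Type*} [Ring R] [IsDomain R] [NeZero (2 : R)]
  [AddCommGroup V] [Module R V] [Module.IsTorsionFree R V]
  {κ : V →ₗ[R] V} {f g : V → V} {c : R}

theorem isFixedPt_add_iff_of_map_eq_neg {v w : V} (hv : IsFixedPt κ v) (hw : κ w = -w) :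
    IsFixedPt κ (v + w) ↔ w = 0 := by
  have two_smul_eq_zero : (2 : R) • w = 0 ↔ w = 0 := smul_eq_zero_iff_right two_ne_zero
  rw [IsFixedPt, map_add, hv.eq, hw, add_right_inj, neg_eq_iff_add_eq_zero, ← two_smul R,
    two_smul_eq_zero]

theorem isFixedPt_add_smul_apply_iff (hf : Semiconj f κ κ) (hg : Semiconj g κ (-κ))
    {x : V} (hx : IsFixedPt κ x) :
    IsFixedPt κ ((f + c • g) x) ↔ c = 0 ∨ g x = 0 := by
  have hgx : κ (g x) = -g x := by
    rw [← neg_eq_iff_eq_neg, ← Pi.neg_apply, ← hg x, hx.eq]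
  have hcgx : κ (c • g x) = -(c • g x) := by rw [map_smul, hgx, smul_neg]
  exact (isFixedPt_add_iff_of_map_eq_neg (hx.map hf) hcgx).trans smul_eq_zero

theorem tfae_semiconj_mapsTo_fixedPoints_eq_zero (hf : Semiconj f κ κ)
    (hg : Semiconj g κ (-κ)) (hne : ∃ x ∈ fixedPoints κ, g x ≠ 0) :
    [Semiconj (f + c • g) κ κ,
      MapsTo (f + c • g) (fixedPoints κ) (fixedPoints κ),
      c = 0].TFAE := by
  tfae_have 1 → 2 := Semiconj.mapsTo_fixedPoints
  tfae_have 2 → 3 := by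
    obtain ⟨x, hx, hgx⟩ := hne
    exact fun h => ((isFixedPt_add_smul_apply_iff hf hg hx).mp (h hx)).resolve_right hgx
  tfae_have 3 → 1 := by
    rintro rfl
    simpa only [zero_smul, add_zero] using hf
  tfae_finish

end AntiEquivariantPerturbation

section VectorField

variable {R : Type*} [CommRing R]

/-- The reflection `κ̃₂` in the third coordinate, as a linear map. -/
def thirdReflection : R × R × R × R →ₗ[R] R × R × R × R :=
  .prodMap .id (.prodMap .id (.prodMap (-.id) .id))

/-- The unperturbed vector field `f₀`. -/
def unperturbedField (α₁ α₂ : R) : R × R × R × R → R × R × R × R :=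
  fun (x₁, x₂, x₃, x₄) =>
    let r2 := x₁ ^ 2 + x₂ ^ 2 + x₃ ^ 2 + x₄ ^ 2
    (x₁ * (1 - r2) - x₄ * x₂ - α₁ * x₁ * x₄ + α₂ * x₁ * x₄ ^ 2,
     x₂ * (1 - r2) + x₄ * x₁ - α₁ * x₂ * x₄ + α₂ * x₂ * x₄ ^ 2,
     x₃ * (1 - r2) + α₁ * x₃ * x₄ + α₂ * x₃ * x₄ ^ 2,
     x₄ * (1 - r2) - α₁ * (x₃ ^ 2 - x₁ ^ 2 - x₂ ^ 2) - α₂ * x₄ * (x₁ ^ 2 + x₂ ^ 2 + x₃ ^ 2))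

/-- The coefficient of `λ` in `f_λ`, the part that breaks the symmetry under `κ̃₂`. -/
def symmetryBreakingField : R × R × R × R → R × R × R × R :=
  fun (x₁, x₂, x₃, x₄) => (0, 0, x₁ * x₂ * x₄, -(x₁ * x₂ * x₃))

/-- The vector field `f_λ`. -/
def perturbedField (α₁ α₂ lam : R) : R × R × R × R → R × R × R × R :=
  unperturbedField α₁ α₂ + lam • symmetryBreakingField

theorem thirdReflection_apply (x₁ x₂ x₃ x₄ : R) :
    thirdReflection (x₁, x₂, x₃, x₄) = (x₁, x₂, -x₃, x₄) := rfl

theorem perturbedField_apply (α₁ α₂ lam x₁ x₂ x₃ x₄ : R) :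
    perturbedField α₁ α₂ lam (x₁, x₂, x₃, x₄) =
      (x₁ * (1 - (x₁ ^ 2 + x₂ ^ 2 + x₃ ^ 2 + x₄ ^ 2))
          - x₄ * x₂ - α₁ * x₁ * x₄ + α₂ * x₁ * x₄ ^ 2,
       x₂ * (1 - (x₁ ^ 2 + x₂ ^ 2 + x₃ ^ 2 + x₄ ^ 2))
          + x₄ * x₁ - α₁ * x₂ * x₄ + α₂ * x₂ * x₄ ^ 2,
       x₃ * (1 - (x₁ ^ 2 + x₂ ^ 2 + x₃ ^ 2 + x₄ ^ 2))
          + α₁ * x₃ * x₄ + α₂ * x₃ * x₄ ^ 2 + lam * x₁ * x₂ * x₄,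
       x₄ * (1 - (x₁ ^ 2 + x₂ ^ 2 + x₃ ^ 2 + x₄ ^ 2))
          - α₁ * (x₃ ^ 2 - x₁ ^ 2 - x₂ ^ 2)
          - α₂ * x₄ * (x₁ ^ 2 + x₂ ^ 2 + x₃ ^ 2) - lam * x₁ * x₂ * x₃) := by
  simp [perturbedField, unperturbedField, symmetryBreakingField, mul_assoc, sub_eq_add_neg]

theorem fixedPoints_thirdReflection [IsDomain R] [NeZero (2 : R)] :
    fixedPoints (thirdReflection (R := R)) = {X | X.2.2.1 = 0} := by
  ext ⟨x₁, x₂, x₃, x₄⟩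
  simp [IsFixedPt, thirdReflection_apply, neg_eq_iff_add_eq_zero, ← two_mul, two_ne_zero]

theorem semiconj_unperturbedField_thirdReflection (α₁ α₂ : R) :
    Semiconj (unperturbedField α₁ α₂) thirdReflection thirdReflection := by
  rintro ⟨x₁, x₂, x₃, x₄⟩
  simp only [unperturbedField, thirdReflection_apply, neg_sq, Prod.mk.injEq, true_and, and_true]
  ring

theorem semiconj_symmetryBreakingField_thirdReflection :
    Semiconj (symmetryBreakingField (R := R)) thirdReflection (-thirdReflection) := by
  rintro ⟨x₁, x₂, x₃, x₄⟩
  simp [symmetryBreakingField, thirdReflection_apply]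

theorem stmt_18_general [IsDomain R] [NeZero (2 : R)] (α₁ α₂ lam : R) :
    [Semiconj (perturbedField α₁ α₂ lam) thirdReflection thirdReflection,
      MapsTo (perturbedField α₁ α₂ lam) {X | X.2.2.1 = 0} {X | X.2.2.1 = 0},
      lam = 0].TFAE := by
  rw [← fixedPoints_thirdReflection]
  refine tfae_semiconj_mapsTo_fixedPoints_eq_zero (semiconj_unperturbedField_thirdReflection α₁ α₂)
    semiconj_symmetryBreakingField_thirdReflection ⟨(1, 1, 0, 1), ?_, ?_⟩
  · simp [fixedPoints_thirdReflection]
  · simp [symmetryBreakingField]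

end VectorField

/-- For all real parameters `α₁, α₂, λ`: the vector field `f_λ` is
equivariant under the reflection `κ̃₂(x₁,x₂,x₃,x₄) = (x₁,x₂,−x₃,x₄)` — i.e.
`f_λ(κ̃₂(X)) = κ̃₂(f_λ(X))` for every `X ∈ ℝ⁴` — if and only if `λ = 0`.
In particular, for `λ = 0` the hyperplane `{x₃ = 0}` is invariant (the third
component of `f₀(X)` vanishes whenever `x₃ = 0`), while for `λ ≠ 0` there exists
`X` with `x₃ = 0` whose image under `f_λ` has nonzero third component. -/
theorem stmt_18 (α₁ α₂ lam : ℝ)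
    (f : ℝ × ℝ × ℝ × ℝ → ℝ × ℝ × ℝ × ℝ)
    (hf : ∀ x₁ x₂ x₃ x₄ : ℝ, f (x₁, x₂, x₃, x₄) =
      (x₁ * (1 - (x₁ ^ 2 + x₂ ^ 2 + x₃ ^ 2 + x₄ ^ 2))
          - x₄ * x₂ - α₁ * x₁ * x₄ + α₂ * x₁ * x₄ ^ 2,
       x₂ * (1 - (x₁ ^ 2 + x₂ ^ 2 + x₃ ^ 2 + x₄ ^ 2))
          + x₄ * x₁ - α₁ * x₂ * x₄ + α₂ * x₂ * x₄ ^ 2,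
       x₃ * (1 - (x₁ ^ 2 + x₂ ^ 2 + x₃ ^ 2 + x₄ ^ 2))
          + α₁ * x₃ * x₄ + α₂ * x₃ * x₄ ^ 2 + lam * x₁ * x₂ * x₄,
       x₄ * (1 - (x₁ ^ 2 + x₂ ^ 2 + x₃ ^ 2 + x₄ ^ 2))
          - α₁ * (x₃ ^ 2 - x₁ ^ 2 - x₂ ^ 2)
          - α₂ * x₄ * (x₁ ^ 2 + x₂ ^ 2 + x₃ ^ 2) - lam * x₁ * x₂ * x₃))
    (κ : ℝ × ℝ × ℝ × ℝ → ℝ × ℝ × ℝ × ℝ)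
    (hκ : ∀ x₁ x₂ x₃ x₄ : ℝ, κ (x₁, x₂, x₃, x₄) = (x₁, x₂, -x₃, x₄)) :
    ((∀ X : ℝ × ℝ × ℝ × ℝ, f (κ X) = κ (f X)) ↔ lam = 0) ∧
    (lam = 0 → ∀ X : ℝ × ℝ × ℝ × ℝ, X.2.2.1 = 0 → (f X).2.2.1 = 0) ∧
    (lam ≠ 0 → ∃ X : ℝ × ℝ × ℝ × ℝ, X.2.2.1 = 0 ∧ (f X).2.2.1 ≠ 0) := by
  obtain rfl : f = perturbedField α₁ α₂ lam :=
    funext fun _ => (hf ..).trans (perturbedField_apply ..).symm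
  obtain rfl : κ = thirdReflection := funext fun _ => hκ ..
  have h := stmt_18_general α₁ α₂ lam
  have invariant_iff := h.out 1 2
  refine ⟨h.out 0 2, invariant_iff.mpr, fun hlam => ?_⟩
  simpa [MapsTo] using mt invariant_iff.mp hlam
end
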